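/- Dirichlet's integral formula: for positive reals a_1,...,a_d, p_1,...,p_d, α_1,...,α_d, the integral over the region V = {x_i ≥ 0 : Σ_i (x_i/a_i)^{p_i} ≤ 1} of ∏_j x_j^{α_j - 1} equals (a_1^{α_1}⋯a_d^{α_d})/(p_1⋯p_d) · Γ(α_1/p_1)⋯Γ(α_d/p_d)/Γ(1 + α_1/p_1 + ⋯ + α_d/p_d). -/

import Mathlib

open MeasureTheory Finset

/-! Let `μ` be the measure `∏ x_i ^ (β_i - 1) dx` on the positive orthant and `g x = ∑ x_i`.
By Tonelli, `∫ exp (-g) dμ = ∫ exp (-t) μ {g ≤ t} dt`. The left-hand side factors as `∏ Γ(β_i)`,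
and since `μ {g ≤ t} = t ^ (∑ β_i) μ {g ≤ 1}` by homogeneity, the right-hand side is
`Γ(1 + ∑ β_i) μ {g ≤ 1}`. The coordinatewise substitution `y_i = (x_i / a_i) ^ p_i` carries the
general region to this simplex, with `β_i = α_i / p_i`.
-/

open scoped NNReal ENNReal

section PiMeasure

variable {ι : Type*} {X : ι → Type*} [∀ i, MeasurableSpace (X i)]
  (μ : ∀ i, Measure (X i)) [∀ i, SigmaFinite (μ i)]

theorem lmarginal_const_mul_finset_prod [DecidableEq ι] {f : ∀ i, X i → ℝ≥0∞}
    (hf : ∀ i, Measurable (f i)) (s : Finset ι) (c : ℝ≥0∞) :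
    ∫⋯∫⁻_s, (fun x ↦ c * ∏ i ∈ s, f i (x i)) ∂μ = fun _ ↦ c * ∏ i ∈ s, ∫⁻ y, f i y ∂μ i := by
  induction s using Finset.induction_on generalizing c with
  | empty => simp only [prod_empty, mul_one, lmarginal_empty]
  | insert i s hi ih =>
    have integrate_coord (x : ∀ i, X i) :
        ∫⁻ y, c * ∏ j ∈ insert i s, f j (Function.update x i y j) ∂μ i =
          (c * ∫⁻ y, f i y ∂μ i) * ∏ j ∈ s, f j (x j) := by
      have prod_update (y : X i) : ∏ j ∈ s, f j (Function.update x i y j) = ∏ j ∈ s, f j (x j) :=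
        prod_congr rfl fun j hj ↦ by rw [Function.update_of_ne (ne_of_mem_of_not_mem hj hi)]
      simp_rw [prod_insert hi, Function.update_self, prod_update]
      rw [lintegral_const_mul _ ((hf i).mul_const _), lintegral_mul_const _ (hf i), mul_assoc]
    rw [lmarginal_insert' _ (by fun_prop) hi]
    simp_rw [integrate_coord, ih, prod_insert hi, mul_assoc]

variable [Fintype ι]

theorem lintegral_fintype_prod_eq_prod {f : ∀ i, X i → ℝ≥0∞} (hf : ∀ i, Measurable (f i)) :
    ∫⁻ x, ∏ i, f i (x i) ∂Measure.pi μ = ∏ i, ∫⁻ y, f i y ∂μ i := by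
  classical
  rcases isEmpty_or_nonempty (∀ i, X i) with hX | ⟨⟨x⟩⟩
  · obtain ⟨i, hi⟩ := isEmpty_pi.1 hX
    rw [lintegral_of_isEmpty, prod_eq_zero (mem_univ i) (lintegral_of_isEmpty _ _)]
  · rw [lintegral_eq_lmarginal_univ x]
    simpa only [one_mul] using congrFun (lmarginal_const_mul_finset_prod μ hf univ 1) x

theorem pi_withDensity {f : ∀ i, X i → ℝ≥0∞} (hf : ∀ i, Measurable (f i))
    [∀ i, SigmaFinite ((μ i).withDensity (f i))] :
    Measure.pi (fun i ↦ (μ i).withDensity (f i)) =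
      (Measure.pi μ).withDensity fun x ↦ ∏ i, f i (x i) := by
  refine Measure.pi_eq fun s hs ↦ ?_
  rw [withDensity_apply _ (.univ_pi hs), Measure.restrict_pi_pi,
    lintegral_fintype_prod_eq_prod _ hf]
  exact prod_congr rfl fun i _ ↦ (withDensity_apply _ (hs i)).symm

theorem pi_nnreal_smul (c : ι → ℝ≥0) :
    Measure.pi (fun i ↦ c i • μ i) = (∏ i, c i) • Measure.pi μ := by
  refine Measure.pi_eq fun s _ ↦ ?_
  simp only [Measure.smul_apply, ENNReal.smul_def, smul_eq_mul, Measure.pi_pi,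
    ENNReal.ofNNReal_finsetProd, prod_mul_distrib]

end PiMeasure

theorem lintegral_Ici_exp_neg (c : ℝ) :
    ∫⁻ t in Set.Ici c, ENNReal.ofReal (Real.exp (-t)) = ENNReal.ofReal (Real.exp (-c)) := by
  rw [setLIntegral_congr Ioi_ae_eq_Ici.symm, ← ofReal_integral_eq_lintegral_ofReal
    (integrableOn_exp_neg_Ioi c) (ae_of_all _ fun t ↦ (Real.exp_pos _).le), integral_exp_neg_Ioi]

theorem lintegral_exp_neg_eq_lintegral_measure_le {Ω : Type*} [MeasurableSpace Ω] (μ : Measure Ω)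
    [SFinite μ] {g : Ω → ℝ} (hg : Measurable g) :
    ∫⁻ x, ENNReal.ofReal (Real.exp (-g x)) ∂μ =
      ∫⁻ t, ENNReal.ofReal (Real.exp (-t)) * μ {x | g x ≤ t} := by
  have hle : MeasurableSet {z : Ω × ℝ | g z.1 ≤ z.2} :=
    measurableSet_le (by fun_prop) (by fun_prop)
  let F : Ω → ℝ → ℝ≥0∞ := fun x t ↦
    {z : Ω × ℝ | g z.1 ≤ z.2}.indicator (fun z ↦ ENNReal.ofReal (Real.exp (-z.2))) (x, t)
  have hF : Measurable (Function.uncurry F) := Measurable.indicator (by fun_prop) hle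
  calc ∫⁻ x, ENNReal.ofReal (Real.exp (-g x)) ∂μ
      = ∫⁻ x, (∫⁻ t, F x t) ∂μ := by
        refine lintegral_congr fun x ↦ ?_
        rw [← lintegral_Ici_exp_neg, ← lintegral_indicator measurableSet_Ici]
        rfl
    _ = ∫⁻ t, ∫⁻ x, F x t ∂μ := lintegral_lintegral_swap hF.aemeasurable
    _ = ∫⁻ t, ENNReal.ofReal (Real.exp (-t)) * μ {x | g x ≤ t} := by
        refine lintegral_congr fun t ↦ ?_
        rw [← lintegral_indicator_const (measurableSet_le hg measurable_const)]
        rfl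

theorem rpow_sub_one_eq_jacobian_mul {a p x : ℝ} (ha : 0 < a) (hp : p ≠ 0) (hx : 0 < x) (s : ℝ) :
    x ^ (s - 1) =
      a ^ s / |p| * (|p * (x / a) ^ (p - 1) * a⁻¹| * ((x / a) ^ p) ^ (s / p - 1)) := by
  have hxa : 0 < x / a := div_pos hx ha
  have exponents : (x / a) ^ (p - 1) * ((x / a) ^ p) ^ (s / p - 1) = (x / a) ^ (s - 1) := by
    rw [← Real.rpow_mul hxa.le, ← Real.rpow_add hxa]
    congr 1
    field_simp
    ring
  have cancel_abs : |p| / |p| = 1 := div_self (abs_ne_zero.2 hp)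
  calc x ^ (s - 1) = a ^ (s - 1) * (x / a) ^ (s - 1) := by
        rw [← Real.mul_rpow ha.le hxa.le, mul_div_cancel₀ _ ha.ne']
    _ = (|p| / |p|) * (a ^ s * a⁻¹) * ((x / a) ^ (p - 1) * ((x / a) ^ p) ^ (s / p - 1)) := by
        rw [exponents, cancel_abs, one_mul, Real.rpow_sub_one ha.ne', div_eq_mul_inv (a ^ s)]
    _ = _ := by
        rw [abs_mul, abs_mul, abs_of_pos (Real.rpow_pos_of_pos hxa _), abs_of_pos (inv_pos.2 ha)]
        ring

theorem bijOn_div_rpow {a p : ℝ} (ha : 0 < a) (hp : p ≠ 0) :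
    Set.BijOn (fun x ↦ (x / a) ^ p) (Set.Ioi 0) (Set.Ioi 0) := by
  refine Set.InvOn.bijOn (f' := fun y ↦ a * y ^ p⁻¹) ⟨fun x hx ↦ ?_, fun y hy ↦ ?_⟩
    (fun x hx ↦ Real.rpow_pos_of_pos (div_pos hx ha) _)
    (fun y hy ↦ mul_pos ha (Real.rpow_pos_of_pos hy _))
  · simp only [Real.rpow_rpow_inv (div_pos hx ha).le hp, mul_div_cancel₀ x ha.ne']
  · simp only [mul_div_cancel_left₀ _ ha.ne', Real.rpow_inv_rpow (le_of_lt hy) hp]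

/-- The measure `x ^ (s - 1) dx` on `(0, ∞)`, against which the Mellin transform at `s` is the
integral. -/
noncomputable def mellinMeasure (s : ℝ) : Measure ℝ :=
  (volume.restrict (Set.Ioi 0)).withDensity fun x ↦ ENNReal.ofReal (x ^ (s - 1))

namespace mellinMeasure

instance (s : ℝ) : SigmaFinite (mellinMeasure s) :=
  inferInstanceAs (SigmaFinite ((volume.restrict (Set.Ioi 0)).withDensity _))

theorem ae_pos (s : ℝ) : ∀ᵐ x ∂mellinMeasure s, 0 < x :=
  (withDensity_absolutelyContinuous _ _).ae_le (ae_restrict_mem measurableSet_Ioi)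

theorem lintegral_eq (s : ℝ) {f : ℝ → ℝ≥0∞} (hf : Measurable f) :
    ∫⁻ x, f x ∂mellinMeasure s = ∫⁻ x in Set.Ioi 0, ENNReal.ofReal (x ^ (s - 1)) * f x :=
  lintegral_withDensity_eq_lintegral_mul _ (by fun_prop) hf

theorem lintegral_exp_neg {s : ℝ} (hs : 0 < s) :
    ∫⁻ x, ENNReal.ofReal (Real.exp (-x)) ∂mellinMeasure s = ENNReal.ofReal (Real.Gamma s) := by
  rw [lintegral_eq s (by fun_prop), Real.Gamma_eq_integral hs,
    ofReal_integral_eq_lintegral_ofReal (Real.GammaIntegral_convergent hs)]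
  · refine lintegral_congr fun x ↦ ?_
    rw [mul_comm, ENNReal.ofReal_mul (Real.exp_pos _).le]
  · filter_upwards [ae_restrict_mem measurableSet_Ioi] with x hx
    exact mul_nonneg (Real.exp_pos _).le (Real.rpow_nonneg (le_of_lt hx) _)

theorem map_div_rpow {a p : ℝ} (ha : 0 < a) (hp : p ≠ 0) (s : ℝ) :
    (mellinMeasure s).map (fun x ↦ (x / a) ^ p) =
      (a ^ s / |p|).toNNReal • mellinMeasure (s / p) := by
  have hderiv (x : ℝ) (hx : x ∈ Set.Ioi 0) : HasDerivWithinAt (fun x ↦ (x / a) ^ p)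
      (p * (x / a) ^ (p - 1) * a⁻¹) (Set.Ioi 0) x := by
    have := (Real.hasDerivAt_rpow_const (p := p) (.inl (div_pos hx ha).ne')).comp x
      ((hasDerivAt_id x).div_const a)
    simpa only [Function.comp_def, id, one_div] using this.hasDerivWithinAt
  refine Measure.ext_of_lintegral _ fun f hf ↦ ?_
  rw [lintegral_map hf (by fun_prop), lintegral_eq _ (by fun_prop), lintegral_smul_measure,
    lintegral_eq _ hf]
  nth_rw 2 [← (bijOn_div_rpow ha hp).image_eq]
  rw [lintegral_image_eq_lintegral_abs_deriv_mul measurableSet_Ioi hderiv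
    (bijOn_div_rpow ha hp).injOn, ENNReal.smul_def, smul_eq_mul,
    ← lintegral_const_mul _ (by fun_prop)]
  refine setLIntegral_congr_fun measurableSet_Ioi fun x hx ↦ ?_
  simp only [rpow_sub_one_eq_jacobian_mul ha hp hx s, ← mul_assoc]
  rw [ENNReal.ofReal_mul (by positivity), ENNReal.ofReal_mul (by positivity)]
  rfl

end mellinMeasure

theorem lintegral_exp_neg_eq_Gamma_mul_measure_le_one {Ω : Type*} [MeasurableSpace Ω]
    (μ : Measure Ω) [SFinite μ] {g : Ω → ℝ} (hg : Measurable g) (hg₀ : ∀ᵐ x ∂μ, 0 ≤ g x)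
    {s : ℝ} (hs : -1 < s)
    (hscale : ∀ t, 0 < t → μ {x | g x ≤ t} = ENNReal.ofReal (t ^ s) * μ {x | g x ≤ 1}) :
    ∫⁻ x, ENNReal.ofReal (Real.exp (-g x)) ∂μ =
      ENNReal.ofReal (Real.Gamma (1 + s)) * μ {x | g x ≤ 1} := by
  have measure_le_of_neg (t : ℝ) (ht : t < 0) : μ {x | g x ≤ t} = 0 :=
    measure_mono_null (fun x (hx : g x ≤ t) ↦ (hx.trans_lt ht).not_ge) hg₀
  calc ∫⁻ x, ENNReal.ofReal (Real.exp (-g x)) ∂μ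
      = ∫⁻ t, ENNReal.ofReal (Real.exp (-t)) * μ {x | g x ≤ t} :=
        lintegral_exp_neg_eq_lintegral_measure_le μ hg
    _ = ∫⁻ t in Set.Ioi 0, ENNReal.ofReal (Real.exp (-t)) * μ {x | g x ≤ t} := by
        rw [setLIntegral_congr Ioi_ae_eq_Ici, setLIntegral_eq_of_support_subset]
        refine fun t ht ↦ Set.mem_Ici.2 <| not_lt.1 fun hlt ↦ ht ?_
        simp only [measure_le_of_neg t hlt, mul_zero]
    _ = (∫⁻ t in Set.Ioi 0, ENNReal.ofReal (t ^ (1 + s - 1)) * ENNReal.ofReal (Real.exp (-t))) *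
          μ {x | g x ≤ 1} := by
        rw [← lintegral_mul_const _ (by fun_prop)]
        refine setLIntegral_congr_fun measurableSet_Ioi fun t ht ↦ ?_
        simp only [hscale t ht, add_sub_cancel_left]
        ring
    _ = ENNReal.ofReal (Real.Gamma (1 + s)) * μ {x | g x ≤ 1} := by
        rw [← mellinMeasure.lintegral_eq _ (by fun_prop),
          mellinMeasure.lintegral_exp_neg (by linarith)]

namespace mellinMeasure

variable {ι : Type*} [Fintype ι]

theorem pi_eq_withDensity (s : ι → ℝ) :
    Measure.pi (fun i ↦ mellinMeasure (s i)) =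
      (volume.restrict (Set.univ.pi fun _ ↦ Set.Ioi 0)).withDensity
        fun x ↦ ∏ i, ENNReal.ofReal (x i ^ (s i - 1)) := by
  rw [volume_pi, Measure.restrict_pi_pi]
  exact pi_withDensity _ fun i ↦ by fun_prop

theorem map_pi_div_rpow {a p : ι → ℝ} (ha : ∀ i, 0 < a i) (hp : ∀ i, p i ≠ 0) (s : ι → ℝ) :
    (Measure.pi fun i ↦ mellinMeasure (s i)).map (fun x i ↦ (x i / a i) ^ p i) =
      (∏ i, a i ^ s i / |p i|).toNNReal • Measure.pi fun i ↦ mellinMeasure (s i / p i) := by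
  have hmap (i : ι) := map_div_rpow (ha i) (hp i) (s i)
  have (i : ι) : SigmaFinite ((mellinMeasure (s i)).map fun x ↦ (x / a i) ^ p i) := by
    rw [hmap i]
    infer_instance
  rw [Measure.pi_map_pi (f := fun i x ↦ (x / a i) ^ p i) fun i ↦ by fun_prop]
  simp only [hmap]
  rw [pi_nnreal_smul, Real.toNNReal_prod_of_nonneg fun i _ ↦
    div_nonneg (Real.rpow_nonneg (ha i).le _) (abs_nonneg _)]

theorem pi_sum_div_rpow_le {a p : ι → ℝ} (ha : ∀ i, 0 < a i) (hp : ∀ i, p i ≠ 0) (s : ι → ℝ)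
    (t : ℝ) :
    Measure.pi (fun i ↦ mellinMeasure (s i)) {x | ∑ i, (x i / a i) ^ p i ≤ t} =
      ENNReal.ofReal (∏ i, a i ^ s i / |p i|) *
        Measure.pi (fun i ↦ mellinMeasure (s i / p i)) {x | ∑ i, x i ≤ t} := by
  have hsimplex : MeasurableSet {x : ι → ℝ | ∑ i, x i ≤ t} :=
    measurableSet_le (by fun_prop) measurable_const
  have hmap := congrArg (· {x : ι → ℝ | ∑ i, x i ≤ t}) (map_pi_div_rpow ha hp s)
  simpa only [Measure.map_apply (show Measurable fun (x : ι → ℝ) i ↦ (x i / a i) ^ p i by fun_prop)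
    hsimplex, Set.preimage_ofPred_eq, Measure.smul_apply, ENNReal.smul_def, smul_eq_mul,
    ENNReal.ofReal] using hmap

theorem pi_sum_le_eq_rpow_mul (s : ι → ℝ) {t : ℝ} (ht : 0 < t) :
    Measure.pi (fun i ↦ mellinMeasure (s i)) {x | ∑ i, x i ≤ t} =
      ENNReal.ofReal (t ^ ∑ i, s i) *
        Measure.pi (fun i ↦ mellinMeasure (s i)) {x | ∑ i, x i ≤ 1} := by
  have := pi_sum_div_rpow_le (a := fun _ ↦ t) (p := 1) (fun _ ↦ ht) (fun _ ↦ one_ne_zero) s 1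
  simpa only [Pi.one_apply, Real.rpow_one, abs_one, div_one, ← sum_div, div_le_one ht,
    ← Real.rpow_sum_of_pos ht] using this

theorem lintegral_pi_exp_neg_sum {s : ι → ℝ} (hs : ∀ i, 0 < s i) :
    ∫⁻ x, ENNReal.ofReal (Real.exp (-∑ i, x i)) ∂Measure.pi (fun i ↦ mellinMeasure (s i)) =
      ENNReal.ofReal (∏ i, Real.Gamma (s i)) := by
  calc _ = ∫⁻ x, ∏ i, ENNReal.ofReal (Real.exp (-x i))
          ∂Measure.pi (fun i ↦ mellinMeasure (s i)) := by
        simp_rw [← sum_neg_distrib, Real.exp_sum,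
          ENNReal.ofReal_prod_of_nonneg fun _ _ ↦ (Real.exp_pos _).le]
    _ = ∏ i, ENNReal.ofReal (Real.Gamma (s i)) := by
        rw [lintegral_fintype_prod_eq_prod (f := fun _ x ↦ ENNReal.ofReal (Real.exp (-x))) _
          fun _ ↦ by fun_prop]
        exact prod_congr rfl fun i _ ↦ lintegral_exp_neg (hs i)
    _ = _ := (ENNReal.ofReal_prod_of_nonneg fun i _ ↦ (Real.Gamma_pos_of_pos (hs i)).le).symm

theorem pi_sum_le_one {s : ι → ℝ} (hs : ∀ i, 0 < s i) :
    Measure.pi (fun i ↦ mellinMeasure (s i)) {x | ∑ i, x i ≤ 1} =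
      ENNReal.ofReal ((∏ i, Real.Gamma (s i)) / Real.Gamma (1 + ∑ i, s i)) := by
  have hsum : 0 ≤ ∑ i, s i := sum_nonneg fun i _ ↦ (hs i).le
  have hΓ : 0 < Real.Gamma (1 + ∑ i, s i) := Real.Gamma_pos_of_pos (by linarith)
  have sum_nonneg_ae : ∀ᵐ x ∂Measure.pi (fun i ↦ mellinMeasure (s i)), 0 ≤ ∑ i, x i := by
    have coord_pos (i : ι) : ∀ᵐ x ∂Measure.pi (fun i ↦ mellinMeasure (s i)), 0 < x i :=
      Measure.tendsto_eval_ae_ae.eventually (ae_pos (s i))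
    filter_upwards [ae_all_iff.2 coord_pos] with x hx using sum_nonneg fun i _ ↦ (hx i).le
  have laplace := lintegral_exp_neg_eq_Gamma_mul_measure_le_one _ (g := fun x : ι → ℝ ↦ ∑ i, x i)
    (by fun_prop) sum_nonneg_ae (by linarith) fun t ht ↦ pi_sum_le_eq_rpow_mul s ht
  rw [lintegral_pi_exp_neg_sum hs] at laplace
  rw [ENNReal.ofReal_div_of_pos hΓ, laplace, mul_comm, ENNReal.mul_div_cancel_right
    (ENNReal.ofReal_pos.2 hΓ).ne' ENNReal.ofReal_ne_top]

theorem setIntegral_prod_rpow {S : Set (ι → ℝ)} (hS : MeasurableSet S) (s : ι → ℝ) :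
    ∫ x in {x | (∀ i, 0 ≤ x i) ∧ x ∈ S}, ∏ i, x i ^ (s i - 1) =
      (Measure.pi fun i ↦ mellinMeasure (s i)).real S := by
  have orthant_ae_eq : {x : ι → ℝ | (∀ i, 0 ≤ x i) ∧ x ∈ S} =ᵐ[volume]
      (S ∩ Set.univ.pi fun _ ↦ Set.Ioi 0 : Set (ι → ℝ)) := by
    rw [Set.inter_comm]
    exact (Measure.univ_pi_Ioi_ae_eq_Ici (f := fun _ ↦ (0 : ℝ))).symm.inter (ae_eq_refl S)
  have hmeas : MeasurableSet (S ∩ Set.univ.pi fun _ ↦ Set.Ioi (0 : ℝ)) :=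
    hS.inter (.univ_pi fun _ ↦ measurableSet_Ioi)
  have rpow_nonneg {x : ι → ℝ} (hx : x ∈ S ∩ Set.univ.pi fun _ ↦ Set.Ioi (0 : ℝ)) (i : ι) :
      0 ≤ x i ^ (s i - 1) := Real.rpow_nonneg (le_of_lt (hx.2 i trivial)) _
  rw [setIntegral_congr_set orthant_ae_eq, integral_eq_lintegral_of_nonneg_ae
    ((ae_restrict_iff' hmeas).2 (ae_of_all _ fun x hx ↦ prod_nonneg fun i _ ↦ rpow_nonneg hx i))
    (Measurable.aestronglyMeasurable (by fun_prop)), measureReal_def, pi_eq_withDensity,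
    withDensity_apply _ hS, Measure.restrict_restrict hS]
  congr 1
  exact setLIntegral_congr_fun hmeas fun x hx ↦
    ENNReal.ofReal_prod_of_nonneg fun i _ ↦ rpow_nonneg hx i

end mellinMeasure

/-- The coordinates with `p i < 0` are bounded away from `0` in the region, up to the null set
`x i = 0` where `Real.rpow` takes the junk value `0 ^ p i = 0`. -/
theorem stmt_16_general {ι : Type*} [Fintype ι] (a p α : ι → ℝ)
    (ha : ∀ i, 0 < a i) (hαp : ∀ i, 0 < α i / p i) :
    ∫ x in {x : ι → ℝ | (∀ i, 0 ≤ x i) ∧ ∑ i, (x i / a i) ^ p i ≤ 1},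
        ∏ j, x j ^ (α j - 1) =
      (∏ j, a j ^ α j) / (∏ j, |p j|) *
        ((∏ j, Real.Gamma (α j / p j)) / Real.Gamma (1 + ∑ j, α j / p j)) := by
  have hp (i : ι) : p i ≠ 0 := (div_ne_zero_iff.1 (hαp i).ne').2
  have hregion : MeasurableSet {x : ι → ℝ | ∑ i, (x i / a i) ^ p i ≤ 1} :=
    measurableSet_le (by fun_prop) measurable_const
  have hscale : 0 ≤ ∏ j, a j ^ α j / |p j| :=
    prod_nonneg fun i _ ↦ div_nonneg (Real.rpow_nonneg (ha i).le _) (abs_nonneg _)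
  have hsimplex : 0 ≤ (∏ j, Real.Gamma (α j / p j)) / Real.Gamma (1 + ∑ j, α j / p j) :=
    div_nonneg (prod_nonneg fun i _ ↦ Real.Gamma_nonneg_of_nonneg (hαp i).le)
      (Real.Gamma_nonneg_of_nonneg (add_nonneg zero_le_one (sum_nonneg fun i _ ↦ (hαp i).le)))
  calc _ = (Measure.pi fun i ↦ mellinMeasure (α i)).real {x | ∑ i, (x i / a i) ^ p i ≤ 1} :=
        mellinMeasure.setIntegral_prod_rpow hregion α
    _ = (∏ j, a j ^ α j / |p j|) *
          ((∏ j, Real.Gamma (α j / p j)) / Real.Gamma (1 + ∑ j, α j / p j)) := by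
        rw [measureReal_def, mellinMeasure.pi_sum_div_rpow_le ha hp,
          mellinMeasure.pi_sum_le_one hαp, ENNReal.toReal_mul, ENNReal.toReal_ofReal hscale,
          ENNReal.toReal_ofReal hsimplex]
    _ = _ := by rw [prod_div_distrib]

theorem stmt_16 (d : ℕ) (a p α : Fin d → ℝ)
    (ha : ∀ i, 0 < a i) (hp : ∀ i, 0 < p i) (hα : ∀ i, 0 < α i) :
    ∫ x in {x : Fin d → ℝ | (∀ i, 0 ≤ x i) ∧ ∑ i, (x i / a i) ^ p i ≤ 1},
        ∏ j, x j ^ (α j - 1) =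
      (∏ j, a j ^ α j) / (∏ j, p j) *
        ((∏ j, Real.Gamma (α j / p j)) / Real.Gamma (1 + ∑ j, α j / p j)) := by
  simpa only [abs_of_pos (hp _)] using stmt_16_general a p α ha fun i ↦ div_pos (hα i) (hp i)
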